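/- Let ρ_k be the standard mollifier on ℝ^3 at scale 1/k asserted above. For 0 ≤ α < 3 and β ∈ ℝ, there is a constant C independent of k such that ∫_{ℝ^3} ρ_k(y) |x-y|^(-α) ⟨x-y⟩^(-β) dy ≤ C |x|^(-α) ⟨x⟩^(-β) for all x ≠ 0. -/

import Mathlib

open MeasureTheory

/-!
The weight `w y = ‖y‖ ^ (-α) * ⟨y⟩ ^ (-β)` satisfies Muckenhoupt's `A₁` condition on balls of
bounded radius: its average over `ball x r` is at most a constant times `w x`. A mollifier at scale
`1 / k` is at most a constant multiple of the normalized indicator of a ball of radius `R / k`, so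
mollifying `w` costs no more than averaging it over such a ball.

For the `A₁` condition, Peetre's inequality makes `⟨·⟩ ^ (-β)` comparable to a constant on
`ball x r`. By scaling, the factor `‖y‖ ^ (-α)` only has to be averaged over balls of radius `1`;
there either `‖y‖ ≥ 1`, and then `‖x‖ ≤ 2 * ‖y‖`, or `‖y‖ < 1`, and then `‖x‖ ≤ 2` and the
integrability of the singularity at the origin gives the bound.
-/

open Metric Module Function Set
open scoped Pointwise

section Average

variable {X : Type*} [MeasurableSpace X] {μ : Measure X} {s : Set X} {f g : X → ℝ}

lemma setAverage_mono_on (hf : IntegrableOn f s μ) (hg : IntegrableOn g s μ)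
    (hs : MeasurableSet s) (h : ∀ x ∈ s, f x ≤ g x) :
    ⨍ x in s, f x ∂μ ≤ ⨍ x in s, g x ∂μ := by
  simp only [setAverage_eq, smul_eq_mul]
  exact mul_le_mul_of_nonneg_left (setIntegral_mono_on hf hg hs h) (by positivity)

lemma setAverage_const_mul (c : ℝ) : ⨍ x in s, c * f x ∂μ = c * ⨍ x in s, f x ∂μ :=
  integral_const_mul c f

lemma setAverage_nonneg (hf : ∀ x, 0 ≤ f x) : 0 ≤ ⨍ x in s, f x ∂μ :=
  integral_nonneg hf

lemma integrableOn_ball_of_locallyIntegrable [PseudoMetricSpace X] [ProperSpace X]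
    (hf : LocallyIntegrable f μ) (x : X) (r : ℝ) : IntegrableOn f (ball x r) μ :=
  (hf.integrableOn_isCompact (isCompact_closedBall x r)).mono_set ball_subset_closedBall

lemma setAverage_ball_indicator_le {E : Type*} [NormedAddCommGroup E] [MeasurableSpace E]
    [BorelSpace E] {μ : Measure E} [μ.IsAddHaarMeasure] {f : E → ℝ} (hf : ∀ y, 0 ≤ f y) (x : E)
    {r : ℝ} (hfi : IntegrableOn f (ball 0 r) μ) :
    ⨍ y in ball x r, (ball 0 r).indicator f y ∂μ ≤ ⨍ y in ball 0 r, f y ∂μ := by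
  have hintegral : ∫ y in ball x r, (ball 0 r).indicator f y ∂μ ≤ ∫ y in ball 0 r, f y ∂μ := by
    rw [← integral_indicator (s := ball 0 r) measurableSet_ball]
    exact setIntegral_le_integral ((integrable_indicator_iff measurableSet_ball).2 hfi)
      (ae_of_all _ (indicator_nonneg fun y _ ↦ hf y))
  rw [setAverage_eq, setAverage_eq, Measure.addHaar_real_ball_center]
  gcongr

end Average

section JapaneseBracket

variable {E : Type*} [SeminormedAddCommGroup E]

/-- The Japanese bracket `⟨x⟩ = (1 + ‖x‖ ^ 2) ^ (1 / 2)`, a positive substitute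
for the norm that measures size at infinity. -/
noncomputable def japaneseBracket (x : E) : ℝ :=
  √(1 + ‖x‖ ^ 2)

lemma japaneseBracket_pos (x : E) : 0 < japaneseBracket x :=
  Real.sqrt_pos.2 (by positivity)

lemma japaneseBracket_neg (x : E) : japaneseBracket (-x) = japaneseBracket x := by
  simp only [japaneseBracket, norm_neg]

lemma continuous_japaneseBracket : Continuous (japaneseBracket : E → ℝ) := by
  unfold japaneseBracket
  fun_prop

lemma japaneseBracket_add_le (x y : E) :
    japaneseBracket (x + y) ≤ √2 * japaneseBracket y * japaneseBracket x := by
  simp only [japaneseBracket]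
  rw [← Real.sqrt_mul (by positivity), ← Real.sqrt_mul (by positivity)]
  refine Real.sqrt_le_sqrt ?_
  have h : ‖x + y‖ ^ 2 ≤ (‖x‖ + ‖y‖) ^ 2 := by gcongr; exact norm_add_le x y
  nlinarith [sq_nonneg (‖x‖ - ‖y‖), mul_nonneg (sq_nonneg ‖x‖) (sq_nonneg ‖y‖)]

lemma rpow_le_rpow_abs_mul_rpow {a b c : ℝ} (ha : 0 < a) (hb : 0 < b) (hab : a ≤ c * b)
    (hba : b ≤ c * a) (s : ℝ) : a ^ s ≤ c ^ |s| * b ^ s := by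
  have hc : 0 < c := pos_of_mul_pos_left (ha.trans_le hab) hb.le
  rcases le_total 0 s with hs | hs
  · rw [abs_of_nonneg hs, ← Real.mul_rpow hc.le hb.le]
    exact Real.rpow_le_rpow ha.le hab hs
  · calc a ^ s ≤ (b / c) ^ s :=
          Real.rpow_le_rpow_of_nonpos (by positivity) ((div_le_iff₀' hc).2 hba) hs
      _ = c ^ |s| * b ^ s := by
          rw [abs_of_nonpos hs, Real.div_rpow hb.le hc.le, Real.rpow_neg hc.le, div_eq_inv_mul]

/-- Peetre's inequality. -/
lemma japaneseBracket_add_rpow_le (x y : E) (s : ℝ) :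
    japaneseBracket (x + y) ^ s ≤ (√2 * japaneseBracket y) ^ |s| * japaneseBracket x ^ s := by
  refine rpow_le_rpow_abs_mul_rpow (japaneseBracket_pos _) (japaneseBracket_pos _)
    (japaneseBracket_add_le x y) ?_ s
  simpa only [add_neg_cancel_right, japaneseBracket_neg] using japaneseBracket_add_le (x + y) (-y)

lemma japaneseBracket_rpow_le_of_mem_ball {x y : E} {R : ℝ} (hy : y ∈ ball x R) (s : ℝ) :
    japaneseBracket y ^ s ≤ (√2 * √(1 + R ^ 2)) ^ |s| * japaneseBracket x ^ s := by
  have hle : japaneseBracket (y - x) ≤ √(1 + R ^ 2) := by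
    unfold japaneseBracket
    gcongr
    exact (mem_ball_iff_norm.1 hy).le
  have := japaneseBracket_pos x
  have := japaneseBracket_pos (y - x)
  calc japaneseBracket y ^ s = japaneseBracket (x + (y - x)) ^ s := by rw [add_sub_cancel]
    _ ≤ (√2 * japaneseBracket (y - x)) ^ |s| * japaneseBracket x ^ s :=
        japaneseBracket_add_rpow_le x (y - x) s
    _ ≤ (√2 * √(1 + R ^ 2)) ^ |s| * japaneseBracket x ^ s := by gcongr

end JapaneseBracket

section NormRpow

lemma norm_rpow_neg_le_of_mem_ball {E : Type*} [NormedAddCommGroup E] {α : ℝ} (hα : 0 ≤ α)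
    {x y : E} (hx : x ≠ 0) (hy : y ∈ ball x 1) :
    ‖y‖ ^ (-α) ≤
      2 ^ α * ‖x‖ ^ (-α) * (1 + (ball (0 : E) 1).indicator (fun z ↦ ‖z‖ ^ (-α)) y) := by
  have hx0 : 0 < ‖x‖ := norm_pos_iff.2 hx
  have hxy : ‖x‖ ≤ ‖y‖ + 1 := by
    have := norm_sub_norm_le x y
    have := mem_ball_iff_norm'.1 hy
    linarith
  have hhalf : 2 ^ α * ‖x‖ ^ (-α) = (‖x‖ / 2) ^ (-α) := by
    rw [Real.div_rpow hx0.le zero_le_two, Real.rpow_neg zero_le_two, div_inv_eq_mul, mul_comm]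
  rw [hhalf]
  by_cases hy1 : ‖y‖ < 1
  · have hone : 1 ≤ (‖x‖ / 2) ^ (-α) :=
      Real.one_le_rpow_of_pos_of_le_one_of_nonpos (by positivity) (by linarith) (by linarith)
    rw [indicator_of_mem (mem_ball_zero_iff.2 hy1)]
    calc ‖y‖ ^ (-α) ≤ 1 + ‖y‖ ^ (-α) := le_add_of_nonneg_left zero_le_one
      _ ≤ (‖x‖ / 2) ^ (-α) * (1 + ‖y‖ ^ (-α)) := le_mul_of_one_le_left (by positivity) hone
  · rw [indicator_of_notMem (mt mem_ball_zero_iff.1 hy1), add_zero, mul_one]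
    exact Real.rpow_le_rpow_of_nonpos (by positivity) (by linarith) (by linarith)

variable {E : Type*} [NormedAddCommGroup E] [NormedSpace ℝ E] [FiniteDimensional ℝ E]
  [MeasurableSpace E] [BorelSpace E] {μ : Measure E} [μ.IsAddHaarMeasure]

lemma locallyIntegrable_norm_rpow_neg {α : ℝ} (hα : α < finrank ℝ E) :
    LocallyIntegrable (fun y : E ↦ ‖y‖ ^ (-α)) μ := by
  rcases subsingleton_or_nontrivial E with hE | hE
  · exact continuous_of_const (fun x y ↦ by rw [Subsingleton.elim x y]) |>.locallyIntegrable
  · refine locallyIntegrable_of_norm_le_rpow (C := 1) finrank_pos hα (ae_of_all _ fun y ↦ ?_)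
      (measurable_norm.pow_const _).aestronglyMeasurable
    rw [one_mul, Real.norm_of_nonneg (by positivity)]

lemma setAverage_ball_smul (f : E → ℝ) (x : E) {r : ℝ} (hr : 0 < r) :
    ⨍ y in ball (r • x) r, f y ∂μ = ⨍ y in ball x 1, f (r • y) ∂μ := by
  have hball : ball (r • x) r = r • ball x 1 := by
    rw [_root_.smul_ball hr.ne', Real.norm_of_nonneg hr.le, mul_one]
  have hd : 0 < r ^ finrank ℝ E := by positivity
  have hμ : μ.real (r • ball x 1) = r ^ finrank ℝ E * μ.real (ball x 1) := by
    rw [measureReal_def, Measure.addHaar_smul_of_nonneg μ hr.le, ENNReal.toReal_mul,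
      ENNReal.toReal_ofReal hd.le, measureReal_def]
  rw [hball, setAverage_eq, setAverage_eq, Measure.setIntegral_comp_smul_of_pos μ f _ hr, hμ,
    mul_inv_rev, mul_smul]

lemma setAverage_unitBall_norm_rpow_neg_le {α : ℝ} (hα0 : 0 ≤ α) (hα : α < finrank ℝ E) {x : E}
    (hx : x ≠ 0) :
    ⨍ y in ball x 1, ‖y‖ ^ (-α) ∂μ ≤
      2 ^ α * (1 + ⨍ y in ball 0 1, ‖y‖ ^ (-α) ∂μ) * ‖x‖ ^ (-α) := by
  have hloc (z : E) : IntegrableOn (fun y ↦ ‖y‖ ^ (-α)) (ball z 1) μ :=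
    integrableOn_ball_of_locallyIntegrable (locallyIntegrable_norm_rpow_neg hα) z 1
  have hind : IntegrableOn ((ball (0 : E) 1).indicator fun z ↦ ‖z‖ ^ (-α)) (ball x 1) μ :=
    ((integrable_indicator_iff measurableSet_ball).2 (hloc 0)).integrableOn
  have hone : IntegrableOn (fun _ ↦ (1 : ℝ)) (ball x 1) μ :=
    integrableOn_const measure_ball_lt_top.ne
  calc ⨍ y in ball x 1, ‖y‖ ^ (-α) ∂μ
      ≤ ⨍ y in ball x 1, 2 ^ α * ‖x‖ ^ (-α) *
          (1 + (ball (0 : E) 1).indicator (fun z ↦ ‖z‖ ^ (-α)) y) ∂μ :=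
        setAverage_mono_on (hloc x) ((hone.add hind).const_mul _) measurableSet_ball
          fun y hy ↦ norm_rpow_neg_le_of_mem_ball hα0 hx hy
    _ = 2 ^ α * ‖x‖ ^ (-α) *
          (1 + ⨍ y in ball x 1, (ball (0 : E) 1).indicator (fun z ↦ ‖z‖ ^ (-α)) y ∂μ) := by
        rw [setAverage_const_mul, average, integral_add hone.to_average hind.to_average]
        congr 2
        exact setAverage_const (measure_ball_pos μ x one_pos).ne' measure_ball_lt_top.ne 1
    _ ≤ 2 ^ α * ‖x‖ ^ (-α) * (1 + ⨍ y in ball 0 1, ‖y‖ ^ (-α) ∂μ) := by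
        gcongr
        exact setAverage_ball_indicator_le (fun y ↦ by positivity) x (hloc 0)
    _ = 2 ^ α * (1 + ⨍ y in ball 0 1, ‖y‖ ^ (-α) ∂μ) * ‖x‖ ^ (-α) := by ring

lemma setAverage_ball_norm_rpow_neg_le {α : ℝ} (hα0 : 0 ≤ α) (hα : α < finrank ℝ E) {x : E}
    (hx : x ≠ 0) {r : ℝ} (hr : 0 < r) :
    ⨍ y in ball x r, ‖y‖ ^ (-α) ∂μ ≤
      2 ^ α * (1 + ⨍ y in ball 0 1, ‖y‖ ^ (-α) ∂μ) * ‖x‖ ^ (-α) := by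
  obtain ⟨z, rfl⟩ : ∃ z, r • z = x := ⟨r⁻¹ • x, smul_inv_smul₀ hr.ne' x⟩
  have hhom (y : E) : ‖r • y‖ ^ (-α) = r ^ (-α) * ‖y‖ ^ (-α) := by
    rw [norm_smul, Real.norm_of_nonneg hr.le, Real.mul_rpow hr.le (norm_nonneg y)]
  simp only [setAverage_ball_smul (fun y ↦ ‖y‖ ^ (-α)) z hr, hhom, setAverage_const_mul]
  rw [mul_left_comm]
  gcongr
  exact setAverage_unitBall_norm_rpow_neg_le hα0 hα (right_ne_zero_of_smul hx)

end NormRpow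

section PowerWeight

variable {E : Type*} [NormedAddCommGroup E]

/-- The weight `‖y‖ ^ (-α) * ⟨y⟩ ^ (-β)`: order `-α` at the origin, order `-(α + β)` at infinity. -/
noncomputable def powerWeight (α β : ℝ) (y : E) : ℝ :=
  ‖y‖ ^ (-α) * japaneseBracket y ^ (-β)

lemma powerWeight_nonneg (α β : ℝ) (y : E) : 0 ≤ powerWeight α β y :=
  mul_nonneg (by positivity) (Real.rpow_nonneg (japaneseBracket_pos y).le _)

variable [NormedSpace ℝ E] [FiniteDimensional ℝ E] [MeasurableSpace E] [BorelSpace E]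
  {μ : Measure E} [μ.IsAddHaarMeasure]

lemma locallyIntegrable_powerWeight {α : ℝ} (hα : α < finrank ℝ E) (β : ℝ) :
    LocallyIntegrable (powerWeight α β : E → ℝ) μ :=
  (locallyIntegrable_norm_rpow_neg hα).mul_continuous <|
    continuous_japaneseBracket.rpow_const fun y ↦ .inl (japaneseBracket_pos y).ne'

lemma exists_setAverage_ball_powerWeight_le (μ : Measure E) [μ.IsAddHaarMeasure] {α : ℝ}
    (hα0 : 0 ≤ α) (hα : α < finrank ℝ E) (β R : ℝ) :
    ∃ C > 0, ∀ x : E, x ≠ 0 → ∀ r, 0 < r → r ≤ R →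
      ⨍ y in ball x r, powerWeight α β y ∂μ ≤ C * powerWeight α β x := by
  set A : ℝ := (√2 * √(1 + R ^ 2)) ^ |-β|
  set B : ℝ := 2 ^ α * (1 + ⨍ y in ball (0 : E) 1, ‖y‖ ^ (-α) ∂μ)
  have havg : 0 ≤ ⨍ y in ball (0 : E) 1, ‖y‖ ^ (-α) ∂μ := setAverage_nonneg fun y ↦ by positivity
  refine ⟨A * B, by positivity, fun x hx r hr hrR ↦ ?_⟩
  have hbr : 0 ≤ japaneseBracket x ^ (-β) := Real.rpow_nonneg (japaneseBracket_pos x).le _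
  have hpt : ∀ y ∈ ball x r,
      powerWeight α β y ≤ A * japaneseBracket x ^ (-β) * ‖y‖ ^ (-α) := fun y hy ↦ by
    rw [powerWeight, mul_comm]
    gcongr
    exact japaneseBracket_rpow_le_of_mem_ball (ball_subset_ball hrR hy) (-β)
  calc ⨍ y in ball x r, powerWeight α β y ∂μ
      ≤ ⨍ y in ball x r, A * japaneseBracket x ^ (-β) * ‖y‖ ^ (-α) ∂μ :=
        setAverage_mono_on
          (integrableOn_ball_of_locallyIntegrable (locallyIntegrable_powerWeight hα β) x r)
          ((integrableOn_ball_of_locallyIntegrable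
            (locallyIntegrable_norm_rpow_neg hα) x r).const_mul _)
          measurableSet_ball hpt
    _ = A * japaneseBracket x ^ (-β) * ⨍ y in ball x r, ‖y‖ ^ (-α) ∂μ := setAverage_const_mul _
    _ ≤ A * japaneseBracket x ^ (-β) * (B * ‖x‖ ^ (-α)) := by
        gcongr
        exact setAverage_ball_norm_rpow_neg_le hα0 hα hx hr
    _ = A * B * powerWeight α β x := by rw [powerWeight]; ring

end PowerWeight

section Mollification

variable {E : Type*} [NormedAddCommGroup E] [NormedSpace ℝ E]

/-- The mollifier `ρ_k(y) = k ^ d * ρ (k y)` at scale `1 / k`, where `d = dim E`. -/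
noncomputable def mollifierAt (ρ : E → ℝ) (k : ℝ) (y : E) : ℝ :=
  k ^ finrank ℝ E * ρ (k • y)

variable {ρ f : E → ℝ} {M R k : ℝ}

lemma abs_mollifierAt_le (hM : ∀ y, |ρ y| ≤ M) (hk : 0 < k) (y : E) :
    |mollifierAt ρ k y| ≤ k ^ finrank ℝ E * M := by
  rw [mollifierAt, abs_mul, abs_of_pos (pow_pos hk _)]
  gcongr
  exact hM _

lemma support_mollifierAt_subset (hR : support ρ ⊆ ball 0 R) (hk : 0 < k) :
    support (mollifierAt ρ k) ⊆ ball 0 (R / k) := fun y hy ↦ by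
  have hky : ‖k • y‖ < R := mem_ball_zero_iff.1 (hR (right_ne_zero_of_mul hy))
  rw [norm_smul, Real.norm_of_nonneg hk.le] at hky
  rwa [mem_ball_zero_iff, lt_div_iff₀' hk]

lemma support_mollifierAt_sub_mul_subset (hR : support ρ ⊆ ball 0 R) (hk : 0 < k) (x : E) :
    support (fun y ↦ mollifierAt ρ k (x - y) * f y) ⊆ ball x (R / k) := fun _ hy ↦
  mem_ball_iff_norm'.2 <|
    mem_ball_zero_iff.1 (support_mollifierAt_subset hR hk (left_ne_zero_of_mul hy))

variable [FiniteDimensional ℝ E] [MeasurableSpace E] [BorelSpace E] {μ : Measure E}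
  [μ.IsAddHaarMeasure]

lemma aestronglyMeasurable_mollifierAt (hρ : AEStronglyMeasurable ρ μ) (hk : k ≠ 0) :
    AEStronglyMeasurable (mollifierAt ρ k) μ :=
  (hρ.comp_quasiMeasurePreserving (Measure.quasiMeasurePreserving_smul μ hk)).const_mul _

lemma integrable_mollifierAt_mul (hρ : AEStronglyMeasurable ρ μ) (hM : ∀ y, |ρ y| ≤ M)
    (hR : support ρ ⊆ ball 0 R) (hk : 0 < k) {x : E} (hf : IntegrableOn f (ball x (R / k)) μ) :
    Integrable (fun y ↦ mollifierAt ρ k y * f (x - y)) μ := by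
  have hmeas : AEStronglyMeasurable (fun y ↦ mollifierAt ρ k (x - y)) μ :=
    (aestronglyMeasurable_mollifierAt hρ hk.ne').comp_quasiMeasurePreserving
      (quasiMeasurePreserving_sub_left μ x)
  have hintegral : Integrable (fun y ↦ mollifierAt ρ k (x - y) * f y) μ :=
    (integrableOn_iff_integrable_of_support_subset
      (support_mollifierAt_sub_mul_subset hR hk x)).1 <|
      hf.bdd_mul hmeas.restrict (ae_of_all _ fun y ↦ abs_mollifierAt_le hM hk (x - y))
  simpa only [sub_sub_cancel] using hintegral.comp_sub_left x

lemma abs_integral_mollifierAt_mul_le (hM : ∀ y, |ρ y| ≤ M) (hR : support ρ ⊆ ball 0 R)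
    (hk : 0 < k) (hf0 : ∀ y, 0 ≤ f y) {x : E} (hf : IntegrableOn f (ball x (R / k)) μ) :
    |∫ y, mollifierAt ρ k y * f (x - y) ∂μ| ≤
      M * μ.real (ball 0 R) * ⨍ y in ball x (R / k), f y ∂μ := by
  have hvol : k ^ finrank ℝ E * μ.real (ball x (R / k)) = μ.real (ball 0 R) := by
    have hball := Measure.addHaar_ball_mul_of_pos μ x hk (R / k)
    rw [mul_div_cancel₀ R hk.ne'] at hball
    rw [← Measure.addHaar_real_ball_center μ x R, measureReal_def, measureReal_def, hball,
      Measure.addHaar_ball_center, ENNReal.toReal_mul, ENNReal.toReal_ofReal (by positivity)]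
  have hpt (y : E) : ‖mollifierAt ρ k (x - y) * f y‖ ≤ k ^ finrank ℝ E * M * f y := by
    rw [norm_mul, Real.norm_of_nonneg (hf0 y)]
    exact mul_le_mul_of_nonneg_right (abs_mollifierAt_le hM hk _) (hf0 y)
  calc |∫ y, mollifierAt ρ k y * f (x - y) ∂μ|
      = |∫ y, mollifierAt ρ k (x - y) * f y ∂μ| := by
        rw [← integral_sub_left_eq_self _ μ x]
        simp only [sub_sub_cancel]
    _ = |∫ y in ball x (R / k), mollifierAt ρ k (x - y) * f y ∂μ| := by
        rw [setIntegral_eq_integral_of_forall_compl_eq_zero fun y hy ↦ notMem_support.1 fun h ↦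
          hy (support_mollifierAt_sub_mul_subset hR hk x h)]
    _ ≤ ∫ y in ball x (R / k), k ^ finrank ℝ E * M * f y ∂μ :=
        norm_integral_le_of_norm_le (hf.const_mul _) (ae_of_all _ hpt)
    _ = M * μ.real (ball 0 R) * ⨍ y in ball x (R / k), f y ∂μ := by
        rw [integral_const_mul, ← measure_smul_setAverage f measure_ball_lt_top.ne, ← hvol,
          smul_eq_mul]
        ring

end Mollification

theorem stmt8_general {E : Type*} [NormedAddCommGroup E] [NormedSpace ℝ E] [FiniteDimensional ℝ E]
    [MeasurableSpace E] [BorelSpace E] (μ : Measure E) [μ.IsAddHaarMeasure] {ρ : E → ℝ} {M : ℝ}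
    (hρ : AEStronglyMeasurable ρ μ) (hM : ∀ y, |ρ y| ≤ M) (hρc : HasCompactSupport ρ)
    {α : ℝ} (hα0 : 0 ≤ α) (hα : α < finrank ℝ E) (β : ℝ) :
    ∃ C > 0, ∀ k : ℝ, 1 ≤ k → ∀ x : E, x ≠ 0 →
      Integrable (fun y ↦ mollifierAt ρ k y * powerWeight α β (x - y)) μ ∧
        |∫ y, mollifierAt ρ k y * powerWeight α β (x - y) ∂μ| ≤ C * powerWeight α β x := by
  obtain ⟨R, hR0, hball⟩ := hρc.isCompact.isBounded.subset_ball_lt 0 0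
  have hR : support ρ ⊆ ball 0 R := (subset_tsupport ρ).trans hball
  obtain ⟨C, hC, hA₁⟩ := exists_setAverage_ball_powerWeight_le μ hα0 hα β R
  have hM0 : 0 ≤ M := (abs_nonneg _).trans (hM 0)
  refine ⟨(M * μ.real (ball 0 R) + 1) * C, by positivity, fun k hk x hx ↦ ?_⟩
  have hk0 : 0 < k := one_pos.trans_le hk
  have hw : IntegrableOn (powerWeight α β) (ball x (R / k)) μ :=
    integrableOn_ball_of_locallyIntegrable (locallyIntegrable_powerWeight hα β) x (R / k)
  have hw0 := powerWeight_nonneg α β x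
  refine ⟨integrable_mollifierAt_mul hρ hM hR hk0 hw, ?_⟩
  calc |∫ y, mollifierAt ρ k y * powerWeight α β (x - y) ∂μ|
      ≤ M * μ.real (ball 0 R) * ⨍ y in ball x (R / k), powerWeight α β y ∂μ :=
        abs_integral_mollifierAt_mul_le hM hR hk0 (powerWeight_nonneg α β) hw
    _ ≤ M * μ.real (ball 0 R) * (C * powerWeight α β x) := by
        gcongr
        exact hA₁ x hx (R / k) (by positivity) (div_le_self hR0.le hk)
    _ ≤ (M * μ.real (ball 0 R) + 1) * C * powerWeight α β x := by
        rw [mul_assoc _ C]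
        gcongr
        exact le_add_of_nonneg_right zero_le_one

theorem stmt8 (ρ : EuclideanSpace ℝ (Fin 3) → ℝ)
    (hρsm : ContDiff ℝ (⊤ : ℕ∞) ρ) (hρnn : ∀ y, 0 ≤ ρ y)
    (hρsupp : ∀ y, ρ y ≠ 0 → ‖y‖ < 1)
    (hρint : ∫ y, ρ y = 1)
    (ρk : ℕ → EuclideanSpace ℝ (Fin 3) → ℝ)
    (hρk : ∀ k y, ρk k y = (k : ℝ) ^ 3 * ρ ((k : ℝ) • y))
    (α β : ℝ) (hα0 : 0 ≤ α) (hα3 : α < 3) :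
    ∃ C > 0, ∀ k : ℕ, 1 ≤ k → ∀ x : EuclideanSpace ℝ (Fin 3), x ≠ 0 →
      ∫ y, ρk k y * ‖x - y‖ ^ (-α) * (Real.sqrt (1 + ‖x - y‖ ^ 2)) ^ (-β)
        ≤ C * ‖x‖ ^ (-α) * (Real.sqrt (1 + ‖x‖ ^ 2)) ^ (-β) := by
  have hρc : HasCompactSupport ρ := .of_support_subset_isCompact (isCompact_closedBall 0 1)
    fun y hy ↦ mem_closedBall_zero_iff.2 (hρsupp y hy).le
  obtain ⟨M, hM⟩ := hρsm.continuous.bounded_above_of_compact_support hρc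
  obtain ⟨C, hC, hbound⟩ := stmt8_general volume hρsm.continuous.aestronglyMeasurable hM hρc hα0
    (by simpa using hα3) β
  refine ⟨C, hC, fun k hk x hx ↦ ?_⟩
  have h := (le_abs_self _).trans (hbound k (by exact_mod_cast hk) x hx).2
  simpa only [hρk, mollifierAt, powerWeight, japaneseBracket, finrank_euclideanSpace_fin,
    ← mul_assoc] using h
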